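/- For integers i < j ≤ k < l with j + k = i + l and any partition ν, the reduced Kronecker coefficients of one-row partitions satisfy ḡ_{(j)(k)}^ν ≥ ḡ_{(i)(l)}^ν. In particular, taking j = k = (λ₁+μ₁)/2, i = μ₁ ≤ j, l = λ₁: ḡ_{((λ₁+μ₁)/2)((λ₁+μ₁)/2)}^ν ≥ ḡ_{(λ₁)(μ₁)}^ν whenever λ₁ + μ₁ is even, i.e., Conjecture (log-concavity of reduced Kronecker coefficients) holds for one-row partitions. -/

import Mathlib

open MvPolynomial

/-- Power sum polynomial `p_r` in `d` variables. -/
noncomputable def powSum (d r : ℕ) : MvPolynomial (Fin d) ℤ := ∑ i, X i ^ r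

/-- The power sum polynomial associated to a permutation: the product of `p_c` over
cycle lengths `c` of the permutation, including fixed points. -/
noncomputable def permPowSum (d : ℕ) (σ : Equiv.Perm (Fin d)) : MvPolynomial (Fin d) ℤ :=
  (σ.cycleType.map (powSum d)).prod * (powSum d 1) ^ (d - σ.cycleType.sum)

/-- The Vandermonde product `a_δ = ∏_{i<j} (x_i - x_j)`. -/
noncomputable def vandermonde (d : ℕ) : MvPolynomial (Fin d) ℤ :=
  ∏ p ∈ Finset.univ.filter (fun p : Fin d × Fin d => p.1 < p.2), (X p.1 - X p.2)

/-- The exponent `λ + δ` where `δ = (d-1, d-2, …, 0)`; `lam` is `0`-indexed. -/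
noncomputable def staircase (d : ℕ) (lam : ℕ → ℕ) : Fin d →₀ ℕ :=
  Finsupp.equivFunOnFinite.symm (fun i => lam i.val + (d - 1 - i.val))

/-- Frobenius character formula: the irreducible character `χ^λ` of the symmetric
group `S_d` evaluated at `σ` is the coefficient of `x^{λ+δ}` in `a_δ · p_{cycletype σ}`. -/
noncomputable def chi (d : ℕ) (lam : ℕ → ℕ) (σ : Equiv.Perm (Fin d)) : ℤ :=
  coeff (staircase d lam) (vandermonde d * permPowSum d σ)

/-- The Kronecker coefficient `g_{λμ}^ν = ⟨χ^λ χ^μ, χ^ν⟩` for `S_d`. -/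
noncomputable def gKron (d : ℕ) (lam mu nu : ℕ → ℕ) : ℤ :=
  (∑ σ : Equiv.Perm (Fin d), chi d lam σ * chi d mu σ * chi d nu σ) / (d.factorial : ℤ)

/-- A partition, encoded as a weakly decreasing finitely supported function `ℕ → ℕ`
(`0`-indexed: `f 0 = λ₁`). -/
def IsPtn (f : ℕ →₀ ℕ) : Prop := ∀ i j : ℕ, i ≤ j → f j ≤ f i

/-- The size `|λ|` of a partition. -/
def psize (f : ℕ →₀ ℕ) : ℕ := f.sum fun _ n => n

/-- The padded partition `λ[d] = (d - |λ|, λ₁, λ₂, …)`. -/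
def pad (f : ℕ →₀ ℕ) (d : ℕ) : ℕ → ℕ := fun i => if i = 0 then d - psize f else f (i - 1)

/-- The one-row partition `(j)`. -/
noncomputable def row (j : ℕ) : ℕ →₀ ℕ := Finsupp.single 0 j



/-- complete homogeneous polynomials of a list, indexed by integers -/
def hz {R : Type*} [CommRing R] : List R → ℤ → R
  | [], n => if n = 0 then 1 else 0
  | (t :: Y), n => if n < 0 then 0 else
      ∑ k ∈ Finset.range (n.toNat + 1), t ^ (n.toNat - k) * hz Y k

section pos
variable {R : Type*} [CommRing R]

theorem hz_neg (Y : List R) (n : ℤ) (h : n < 0) : hz Y n = 0 := by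
  cases Y with
  | nil => simp [hz]; omega
  | cons t Y => simp [hz, h]

theorem hz_zero (Y : List R) : hz Y 0 = 1 := by
  induction Y with
  | nil => simp [hz]
  | cons t Y ih => simp [hz, ih]

theorem hz_rec (t : R) (Y : List R) (n : ℤ) :
    hz (t :: Y) n = t * hz (t :: Y) (n - 1) + hz Y n := by
  rcases lt_or_ge n 0 with h | h
  · rw [hz_neg _ _ h, hz_neg _ _ h, hz_neg _ _ (by omega)]; simp
  obtain ⟨m, rfl⟩ := Int.eq_ofNat_of_zero_le h
  cases m with
  | zero => simp [hz_zero, hz_neg]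
  | succ m =>
    have e : ((m + 1 : ℕ) : ℤ) - 1 = (m : ℤ) := by push_cast; ring
    rw [e]
    simp only [hz]
    rw [if_neg (by omega), if_neg (by omega)]
    simp only [Int.toNat_natCast]
    rw [Finset.sum_range_succ, Finset.mul_sum]
    simp only [Nat.sub_self, pow_zero, one_mul]
    congr 1
    apply Finset.sum_congr rfl
    intro k hk
    have : m + 1 - k = (m - k) + 1 := by have := Finset.mem_range.1 hk; omega
    rw [this, pow_succ]; ring

theorem hz_swap (s t : R) (Y : List R) (n : ℤ) : hz (s :: t :: Y) n = hz (t :: s :: Y) n := by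
  have key : ∀ (s t : R) (n : ℤ), hz (s :: t :: Y) n =
      (s + t) * hz (s :: t :: Y) (n - 1) - s * t * hz (s :: t :: Y) (n - 2) + hz Y n := by
    intro s t n
    have h1 := hz_rec s (t :: Y) n
    have h2 := hz_rec t Y n
    have h3 := hz_rec s (t :: Y) (n - 1)
    rw [show n - 1 - 1 = n - 2 by ring] at h3
    linear_combination h1 + h2 - t * h3
  rcases lt_or_ge n 0 with h | h
  · rw [hz_neg _ _ h, hz_neg _ _ h]
  obtain ⟨m, rfl⟩ := Int.eq_ofNat_of_zero_le h
  induction m using Nat.strong_induction_on with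
  | _ m ih =>
    have ih' : ∀ k : ℤ, k < m → hz (s :: t :: Y) k = hz (t :: s :: Y) k := by
      intro k hk
      rcases lt_or_ge k 0 with h | h
      · rw [hz_neg _ _ h, hz_neg _ _ h]
      obtain ⟨j, rfl⟩ := Int.eq_ofNat_of_zero_le h
      exact ih j (by exact_mod_cast hk) h
    rw [key s t, key t s, ih' _ (by omega), ih' _ (by omega)]; ring

theorem hz_rec2 (x y : R) (n : ℤ) (hn : n ≠ 0) :
    hz [x, y] n = (x + y) * hz [x, y] (n - 1) - x * y * hz [x, y] (n - 2) := by
  have h1 := hz_rec x [y] n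
  have h2 := hz_rec y [] n
  have h3 := hz_rec x [y] (n - 1)
  have h4 : hz ([] : List R) n = 0 := by simp [hz, hn]
  rw [show n - 1 - 1 = n - 2 by ring] at h3
  linear_combination h1 + h2 - y * h3 + h4

theorem hz_rec3 (z x y : R) (n : ℤ) (hn : n ≠ 0) :
    hz [z, x, y] n = (x + y + z) * hz [z, x, y] (n - 1) - (x * y + z * x + z * y) *
      hz [z, x, y] (n - 2) + x * y * z * hz [z, x, y] (n - 3) := by
  have h1 := hz_rec z [x, y] n
  have h3 := hz_rec z [x, y] (n - 1)
  have h4 := hz_rec z [x, y] (n - 2)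
  have h2 := hz_rec2 x y n hn
  rw [show n - 1 - 1 = n - 2 by ring] at h3
  rw [show n - 2 - 1 = n - 3 by ring] at h4
  linear_combination h1 + h2 - (x + y) * h3 + x * y * h4

/-- the cone of unimodal polynomials -/
def cone (x y : R) : AddSubmonoid R :=
  AddSubmonoid.closure {r | ∃ a b : ℕ, r = (x * y) ^ a * hz [x, y] b}

theorem cone_gen (x y : R) (a b : ℕ) : (x * y) ^ a * hz [x, y] b ∈ cone x y :=
  AddSubmonoid.subset_closure ⟨a, b, rfl⟩

theorem cone_mul {x y : R} {r : R} (h : r ∈ cone x y) : x * y * r ∈ cone x y := by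
  induction h using AddSubmonoid.closure_induction with
  | mem r h =>
    obtain ⟨a, b, rfl⟩ := h
    have := cone_gen x y (a + 1) b
    rwa [pow_succ', mul_assoc] at this
  | zero => simp [zero_mem]
  | add a b _ _ ha hb => rw [mul_add]; exact add_mem ha hb

theorem cone_pow_mul {x y : R} {r : R} (h : r ∈ cone x y) (k : ℕ) :
    (x * y) ^ k * r ∈ cone x y := by
  induction k with
  | zero => simpa
  | succ k ih => rw [pow_succ', mul_assoc]; exact cone_mul ih

theorem cone_T (x y : R) (m : ℕ) : ∀ k : ℕ, m ≤ k →
    hz [x, y] k * hz [x, y] m - hz [x, y] (k + 1) * hz [x, y] ((m : ℤ) - 1) ∈ cone x y := by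
  induction m with
  | zero =>
    intro k _
    have := cone_gen x y 0 k
    simpa [hz_zero, hz_neg] using this
  | succ m ih =>
    intro k hk
    obtain ⟨k, rfl⟩ : ∃ j, k = j + 1 := ⟨k - 1, by omega⟩
    have h := cone_mul (ih k (by omega))
    have h1 := hz_rec2 x y (((k + 1 : ℕ) : ℤ) + 1) (by omega)
    have h2 := hz_rec2 x y (((m + 1 : ℕ) : ℤ)) (by omega)
    push_cast at *
    rw [show (k : ℤ) + 1 + 1 - 1 = k + 1 by ring, show (k : ℤ) + 1 + 1 - 2 = k by ring] at h1
    rw [show (m : ℤ) + 1 - 1 = m by ring, show (m : ℤ) + 1 - 2 = m - 1 by ring] at h2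
    rw [show (m : ℤ) + 1 - 1 = m by ring]
    convert h using 1
    linear_combination hz [x, y] ((k : ℤ) + 1) * h2 - hz [x, y] m * h1

theorem cone_V (x y : R) (m : ℕ) : ∀ k : ℕ, m ≤ k →
    hz [x, y] k * hz [x * y, x, y] m - hz [x, y] (k + 1) * hz [x * y, x, y] ((m : ℤ) - 1)
      ∈ cone x y := by
  induction m with
  | zero =>
    intro k _
    have := cone_gen x y 0 k
    simpa [hz_zero, hz_neg] using this
  | succ m ih =>
    intro k hk
    have h := add_mem (cone_mul (ih k (by omega))) (cone_T x y (m + 1) k hk)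
    have h1 := hz_rec (x * y) [x, y] (((m + 1 : ℕ) : ℤ))
    have h2 := hz_rec (x * y) [x, y] (m : ℤ)
    push_cast at *
    rw [show (m : ℤ) + 1 - 1 = m by ring] at *
    convert h using 1
    linear_combination hz [x, y] k * h1 - hz [x, y] (k + 1) * h2

theorem cone_U (x y : R) (m t : ℕ) :
    hz [x * y, x, y] ((m : ℤ) + t - 1) * hz [x * y, x, y] m -
      hz [x * y, x, y] (m + t) * hz [x * y, x, y] ((m : ℤ) - 1) ∈ cone x y := by
  induction t with
  | zero =>
    convert zero_mem (cone x y) using 1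
    push_cast
    rw [show (m : ℤ) + 0 - 1 = m - 1 by ring, add_zero]; ring
  | succ t ih =>
    have h := add_mem (cone_mul ih) (cone_V x y m (m + t) (by omega))
    have h1 := hz_rec (x * y) [x, y] ((m : ℤ) + t)
    have h2 := hz_rec (x * y) [x, y] ((m : ℤ) + t + 1)
    push_cast at *
    rw [show (m : ℤ) + t + 1 - 1 = m + t by ring] at *
    rw [show (m : ℤ) + (t + 1) - 1 = m + t by ring, show (m : ℤ) + (t + 1) = m + t + 1 by ring]
    convert h using 1
    linear_combination hz [x * y, x, y] m * h1 - hz [x * y, x, y] ((m : ℤ) - 1) * h2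

theorem cone_B (x y : R) (m : ℕ) : hz [x * y, x, y] m ∈ cone x y := by
  have := cone_U x y 0 (m + 1)
  simpa [hz_zero, hz_neg] using this

/-- Jacobi-Trudi matrix -/
def JT (Y : List R) (D : ℕ) (μ : ℕ → ℕ) : Matrix (Fin D) (Fin D) R :=
  Matrix.of fun m w => hz Y ((μ m : ℤ) - (m : ℕ) + (w : ℕ))

theorem JT_peel (Y : List R) (D : ℕ) (μ : ℕ → ℕ) (h : μ D = 0) :
    (JT Y (D + 1) μ).det = (JT Y D μ).det := by
  rw [Matrix.det_succ_row _ (Fin.last D), Fin.sum_univ_castSucc, Finset.sum_eq_zero]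
  · simp only [JT, Matrix.of_apply, Fin.val_last, h, zero_add]
    have : ((0 : ℕ) : ℤ) - D + D = 0 := by simp
    rw [this, hz_zero, Even.neg_one_pow ⟨D, rfl⟩, one_mul, one_mul]
    congr 1
    ext a b
    simp [Matrix.submatrix]
  · intro i _
    have : (JT Y (D + 1) μ) (Fin.last D) i.castSucc = 0 := by
      simp only [JT, Matrix.of_apply, Fin.val_last, h]
      apply hz_neg
      have := i.2
      simp; 
    rw [this]; simp

theorem JT_zero (x y z : R) (D : ℕ) (μ : ℕ → ℕ) (hμ : Antitone μ) (h : μ (D + 3) ≠ 0) :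
    (JT [z, x, y] (D + 4) μ).det = 0 := by
  let c : Fin (D + 4) → R := fun i => if (i : ℕ) = D + 3 then 1 else
    if (i : ℕ) = D + 2 then -(x + y + z) else if (i : ℕ) = D + 1 then (x * y + z * x + z * y) else
    if (i : ℕ) = D then - (x * y * z) else 0
  have := Matrix.det_updateCol_sum (JT [z, x, y] (D + 4) μ) (Fin.last _) c
  rw [show c (Fin.last _) = 1 by simp [c], one_smul] at this
  rw [← this]
  apply Matrix.det_eq_zero_of_column_eq_zero (Fin.last _)
  intro m
  simp only [Matrix.updateCol_self]
  rw [Fin.sum_univ_castSucc, Fin.sum_univ_castSucc, Fin.sum_univ_castSucc, Fin.sum_univ_castSucc,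
    Finset.sum_eq_zero]
  · have hm : (m : ℕ) ≤ D + 3 := by omega
    have h1 := hμ hm
    have e := hz_rec3 z x y ((μ m : ℤ) - (m : ℕ) + (D + 3 : ℕ)) (by omega)
    simp only [c, JT, Matrix.of_apply, Fin.val_last, Fin.val_castSucc]
    simp
    push_cast at e
    rw [show (μ m : ℤ) - (m : ℕ) + (D + 3) - 1 = (μ m : ℤ) - (m : ℕ) + (D + 2) by ring,
      show (μ m : ℤ) - (m : ℕ) + (D + 3) - 2 = (μ m : ℤ) - (m : ℕ) + (D + 1) by ring,
      show (μ m : ℤ) - (m : ℕ) + (D + 3) - 3 = (μ m : ℤ) - (m : ℕ) + D by ring] at e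
    linear_combination e
  · intro i _
    have := i.2
    have hc : c i.castSucc.castSucc.castSucc.castSucc = 0 := by
      simp only [c, Fin.val_castSucc]
      rw [if_neg (by omega), if_neg (by omega), if_neg (by omega), if_neg (by omega)]
    rw [hc, zero_smul]

theorem JT_three (x y z : R) (μ : ℕ → ℕ) (hμ : Antitone μ) (h : μ 2 ≠ 0) :
    (JT [z, x, y] 3 μ).det = x * y * z * (JT [z, x, y] 3 (fun i => μ i - 1)).det := by
  have h1 := hμ (show 1 ≤ 2 by omega)
  have h0 := hμ (show 0 ≤ 2 by omega)
  rw [Matrix.det_fin_three, Matrix.det_fin_three]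
  have e0 := hz_rec3 z x y ((μ 0 : ℤ) + 2) (by omega)
  have e1 := hz_rec3 z x y ((μ 1 : ℤ) + 1) (by omega)
  have e2 := hz_rec3 z x y ((μ 2 : ℤ)) (by omega)
  simp [JT]
  rw [Nat.cast_sub (by omega), Nat.cast_sub (by omega), Nat.cast_sub (by omega)]
  push_cast
  rw [show (μ 0 : ℤ) + 2 - 1 = μ 0 + 1 by ring, show (μ 0 : ℤ) + 2 - 2 = μ 0 by ring,
    show (μ 0 : ℤ) + 2 - 3 = μ 0 - 1 by ring] at e0
  rw [show (μ 1 : ℤ) + 1 - 1 = μ 1 by ring, show (μ 1 : ℤ) + 1 - 2 = μ 1 - 1 by ring,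
    show (μ 1 : ℤ) + 1 - 3 = μ 1 - 2 by ring] at e1
  simp only [sub_add_cancel, show (μ 0 : ℤ) - 1 + 2 = μ 0 + 1 by ring]
  rw [show (μ 1 : ℤ) - 1 - 1 = μ 1 - 2 by ring,
    show (μ 1 : ℤ) - 2 + 2 = μ 1 by ring,
    show (μ 1 : ℤ) - 1 + 2 = μ 1 + 1 by ring,
    show (μ 2 : ℤ) - 1 - 2 = μ 2 - 3 by ring,
    show (μ 2 : ℤ) - 2 + 1 = μ 2 - 1 by ring,
    show (μ 2 : ℤ) - 3 + 1 = μ 2 - 2 by ring]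
  rw [e0, e1, e2]
  ring

theorem JT_mem (x y : R) (D : ℕ) : ∀ (μ : ℕ → ℕ), Antitone μ →
    (JT [x * y, x, y] D μ).det ∈ cone x y := by
  have h2 : ∀ (μ : ℕ → ℕ), Antitone μ → (JT [x * y, x, y] 2 μ).det ∈ cone x y := by
    intro μ hμ
    have h0 := hμ (show 0 ≤ 1 by omega)
    have := cone_U x y (μ 1) (μ 0 + 1 - μ 1)
    rw [Nat.cast_sub (by omega)] at this
    rw [Matrix.det_fin_two]
    simp [JT]
    push_cast at this
    rw [show (μ 1 : ℤ) + (μ 0 + 1 - μ 1) - 1 = μ 0 by ring,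
      show (μ 1 : ℤ) + (μ 0 + 1 - μ 1) = μ 0 + 1 by ring] at this
    exact this
  have h3 : ∀ (c : ℕ) (μ : ℕ → ℕ), Antitone μ → μ 2 = c →
      (JT [x * y, x, y] 3 μ).det ∈ cone x y := by
    intro c
    induction c with
    | zero => intro μ hμ h; rw [JT_peel _ _ _ h]; exact h2 μ hμ
    | succ c ih =>
      intro μ hμ h
      rw [JT_three _ _ _ _ hμ (by omega), mul_assoc]
      apply cone_mul
      apply cone_mul
      apply ih
      · intro a b hab
        have := hμ hab
        simp only; omega
      · simp [h]
  intro μ hμ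
  induction D with
  | zero =>
    have := cone_gen x y 0 0
    simpa [hz_zero] using this
  | succ D ih =>
    by_cases hz : μ D = 0
    · rw [JT_peel _ _ _ hz]; exact ih
    match D, hz with
    | 0, _ => 
      rw [Matrix.det_fin_one]
      simp [JT]
      exact cone_B x y _
    | 1, _ => exact h2 μ hμ
    | 2, _ => exact h3 _ μ hμ rfl
    | (D + 3), hz => rw [JT_zero _ _ _ _ _ hμ hz]; exact zero_mem _

end pos

section red
variable {R : Type*} [CommRing R]

theorem hz_dvd (T : R) (Y : List R) (hY : ∀ t ∈ Y, T ∣ t) (n : ℕ) : T ^ n ∣ hz Y n := by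
  induction Y generalizing n with
  | nil =>
    cases n with
    | zero => simp
    | succ n => simp only [hz]; rw [if_neg (by omega)]; exact dvd_zero _
  | cons t Y ih =>
    have ih' := ih (fun s hs => hY s (List.mem_cons_of_mem _ hs))
    induction n with
    | zero => simp
    | succ n ihn =>
      rw [hz_rec]
      apply dvd_add _ (ih' _)
      push_cast
      rw [add_sub_cancel_right, pow_succ']
      exact mul_dvd_mul (hY t List.mem_cons_self) ihn

theorem hz_singleton (t : R) (k : ℕ) : hz [t] k = t ^ k := by
  induction k with
  | zero => simp [hz_zero]
  | succ k ih =>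
    rw [hz_rec]
    push_cast
    rw [add_sub_cancel_right, ih]
    simp only [hz]
    rw [if_neg (by omega)]
    ring

theorem hz_tele (t : R) (Y : List R) (N : ℕ) :
    (1 - t) * ∑ k ∈ Finset.range (N + 1), hz (t :: Y) k =
      ∑ k ∈ Finset.range (N + 1), hz Y k - t * hz (t :: Y) N := by
  induction N with
  | zero => simp [hz_zero]
  | succ N ih =>
    rw [Finset.sum_range_succ, mul_add, ih, Finset.sum_range_succ _ (N + 1)]
    have := hz_rec t Y (N + 1 : ℕ)
    push_cast at this ⊢
    rw [add_sub_cancel_right] at this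
    linear_combination this

theorem row_zero (T x y : R) (hx : T ∣ x) (hy : T ∣ y) (N : ℕ) :
    T ^ N ∣ (1 - x) * (1 - y) * hz [1, x * y, x, y] N -
      ∑ k ∈ Finset.range (N + 1), (x * y) ^ k := by
  have hA : hz [1, x * y, x, y] N = ∑ k ∈ Finset.range (N + 1), hz [x * y, x, y] k := by
    rw [hz]
    simp
  have h1 := hz_tele x [x * y, y] N
  have h2 := hz_tele y [x * y] N
  simp only [hz_swap x (x * y), hz_swap y (x * y), hz_singleton] at h1 h2
  have h3 := hz_dvd T [x * y, x, y] (by simp [hx, hy, Dvd.dvd.mul_right]) N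
  have h4 := hz_dvd T [x * y, y] (by simp [hx, hy, Dvd.dvd.mul_right]) N
  have : (1 - x) * (1 - y) * hz [1, x * y, x, y] N -
      ∑ k ∈ Finset.range (N + 1), (x * y) ^ k =
      (- x * (1 - y)) * hz [x * y, x, y] N + (- y) * hz [x * y, y] N := by
    rw [hA]
    linear_combination (1 - y) * h1 + h2
  rw [this]
  exact dvd_add (Dvd.dvd.mul_left h3 _) (Dvd.dvd.mul_left h4 _)

theorem JT_reduce (T x y : R) (hx : T ∣ x) (hy : T ∣ y) (D : ℕ) (μ : ℕ → ℕ)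
    (hμ : Antitone fun i => μ (i + 1)) :
    ∃ r ∈ cone x y, T ^ (μ 0) ∣ (1 - x) * (1 - y) * (JT [1, x * y, x, y] (D + 1) μ).det - r := by
  let B : Matrix (Fin (D + 1)) (Fin (D + 1)) R := Matrix.of fun i j =>
    if (j : ℕ) = 0 then hz [1, x * y, x, y] ((μ i : ℤ) - (i : ℕ) + (j : ℕ))
      else hz [x * y, x, y] ((μ i : ℤ) - (i : ℕ) + (j : ℕ))
  have hdet : (JT [1, x * y, x, y] (D + 1) μ).det = B.det := by
    apply Matrix.det_eq_of_forall_col_eq_smul_add_pred (fun _ => 1)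
    · intro i; simp [JT, B]
    · intro i j
      simp only [JT, B, Matrix.of_apply, Fin.val_succ, Fin.val_castSucc]
      rw [if_neg (by omega), hz_rec]
      push_cast
      rw [show (μ i : ℤ) - (i : ℕ) + ((j : ℕ) + 1) - 1 = (μ i : ℤ) - (i : ℕ) + (j : ℕ) by ring]
      ring
  have hmem := JT_mem x y D _ hμ
  refine ⟨(∑ k ∈ Finset.range (μ 0 + 1), (x * y) ^ k) *
    (JT [x * y, x, y] D fun i => μ (i + 1)).det, ?_, ?_⟩
  · rw [Finset.sum_mul]
    exact sum_mem fun k _ => cone_pow_mul hmem k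
  · rw [hdet, Matrix.det_succ_row_zero, Fin.sum_univ_succ]
    have e1 : B.submatrix Fin.succ (Fin.succAbove 0) = JT [x * y, x, y] D fun i => μ (i + 1) := by
      ext a b
      simp [B, JT]
      congr 1
      ring
    have e2 : B 0 0 = hz [1, x * y, x, y] (μ 0) := by simp [B]
    rw [e1, e2]
    obtain ⟨u, hu⟩ := row_zero T x y hx hy (μ 0)
    have h3 : T ^ (μ 0) ∣ ∑ i : Fin D, (-1) ^ ((i.succ : Fin (D + 1)) : ℕ) * B 0 i.succ *
        (B.submatrix Fin.succ i.succ.succAbove).det := by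
      apply Finset.dvd_sum
      intro i _
      apply Dvd.dvd.mul_right
      apply Dvd.dvd.mul_left
      have : B 0 i.succ = hz [x * y, x, y] ((μ 0 + (i + 1) : ℕ) : ℤ) := by
        simp [B]
      rw [this]
      exact (pow_dvd_pow T (Nat.le_add_right _ _)).trans
        (hz_dvd T [x * y, x, y] (by simp [hx, hy, Dvd.dvd.mul_right]) _)
    obtain ⟨v, hv⟩ := h3
    rw [hv]
    refine ⟨u * (JT [x * y, x, y] D fun i => μ (i + 1)).det + (1 - x) * (1 - y) * v, ?_⟩
    simp only [Fin.val_zero, pow_zero, one_mul]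
    linear_combination (JT [x * y, x, y] D fun i => μ (i + 1)).det * hu
end red

section conc
/-- the first variable -/
noncomputable def xq : Polynomial (Polynomial ℤ) := Polynomial.X
/-- the second variable -/
noncomputable def yq : Polynomial (Polynomial ℤ) := Polynomial.C Polynomial.X * Polynomial.X

theorem cone_ineq (f : Polynomial (Polynomial ℤ)) (hf : f ∈ cone xq yq) (i l : ℕ)
    (h : i + 2 ≤ l) : (f.coeff (i + l)).coeff l ≤ (f.coeff (i + l)).coeff (l - 1) := by
  induction hf using AddSubmonoid.closure_induction with
  | mem r h =>
    obtain ⟨a, b, rfl⟩ := h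
    have e : (xq * yq) ^ a * hz [xq, yq] b =
        Polynomial.C (∑ k ∈ Finset.range (b + 1), Polynomial.X ^ (a + k)) * Polynomial.X ^ (2 * a + b) := by
      rw [hz, if_neg (by omega), Finset.mul_sum, map_sum, Finset.sum_mul]
      simp only [Int.toNat_natCast, hz_singleton]
      apply Finset.sum_congr rfl
      intro k hk
      obtain ⟨c, rfl⟩ : ∃ c, b = k + c := ⟨b - k, by have := Finset.mem_range.1 hk; omega⟩
      simp only [add_tsub_cancel_left, map_pow]
      simp only [xq, yq]
      ring
    rw [e]
    simp only [Polynomial.coeff_C_mul, Polynomial.coeff_X_pow]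
    split_ifs with hh
    · simp only [mul_one, Polynomial.finsetSum_coeff, Polynomial.coeff_X_pow]
      have : ∀ m, (∑ k ∈ Finset.range (b + 1), if m = a + k then (1 : ℤ) else 0) =
          if a ≤ m ∧ m ≤ a + b then 1 else 0 := by
        intro m
        split_ifs with hm
        · rw [Finset.sum_eq_single (m - a)]
          · rw [if_pos (by omega)]
          · intro k _ hk; rw [if_neg (by omega)]
          · intro hk; simp at hk; omega
        · apply Finset.sum_eq_zero
          intro k hk; simp at hk; rw [if_neg (by omega)]
      rw [this, this]
      split_ifs <;> first | omega | norm_num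
    · simp
  | zero => simp
  | add a b _ _ ha hb => simp only [Polynomial.coeff_add]; exact add_le_add ha hb

theorem ineq_step (D : ℕ) (μ : ℕ → ℕ) (hμ : Antitone fun i => μ (i + 1)) (i l t : ℕ)
    (hN : i + l < μ 0) (h : i + 2 * t ≤ l) (G : Polynomial (Polynomial ℤ))
    (hG : G = (1 - xq) * (1 - yq) * (JT [1, xq * yq, xq, yq] (D + 1) μ).det) :
    (G.coeff (i + l)).coeff l ≤ (G.coeff (i + l)).coeff (l - t) := by
  obtain ⟨r, hr, hd⟩ := JT_reduce (Polynomial.X : Polynomial (Polynomial ℤ)) xq yq dvd_rfl (dvd_mul_left _ _) D μ hμ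
  rw [← hG, Polynomial.X_pow_dvd_iff] at hd
  have : G.coeff (i + l) = r.coeff (i + l) := by
    have := hd _ hN
    rwa [Polynomial.coeff_sub, sub_eq_zero] at this
  rw [this]
  clear this hd hN
  induction t with
  | zero => simp
  | succ t ih =>
    refine (ih (by omega)).trans ?_
    have := cone_ineq r hr (i + t) (l - t) (by omega)
    rw [show i + t + (l - t) = i + l by omega] at this
    rwa [Nat.sub_sub] at this
end conc

section cyc
variable {R : Type*} [CommRing R]

/-- product over all cycles of a function of the length -/
def PP {d : ℕ} (φ : ℕ → R) (σ : Equiv.Perm (Fin d)) : R :=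
  (σ.cycleType.map φ).prod * φ 1 ^ (d - σ.cycleType.sum)

theorem PP_mul {d : ℕ} (φ ψ : ℕ → R) (σ : Equiv.Perm (Fin d)) :
    PP φ σ * PP ψ σ = PP (fun r => φ r * ψ r) σ := by
  simp only [PP, Multiset.prod_map_mul, mul_pow]; ring

theorem PP_congr {d : ℕ} (φ ψ : ℕ → R) (σ : Equiv.Perm (Fin d)) (h : ∀ r, r ≠ 0 → φ r = ψ r) :
    PP φ σ = PP ψ σ := by
  simp only [PP]
  rw [h 1 one_ne_zero]
  congr 2
  apply Multiset.map_congr rfl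
  intro r hr
  have := Equiv.Perm.two_le_of_mem_cycleType hr
  exact h r (by omega)

theorem PP_map {d : ℕ} {S : Type*} [CommRing S] (f : R →+* S) (φ : ℕ → R)
    (σ : Equiv.Perm (Fin d)) : f (PP φ σ) = PP (fun r => f (φ r)) σ := by
  simp only [PP, map_mul, map_multiset_prod, Multiset.map_map, map_pow]
  rfl

open Classical in
theorem PP_quot {d : ℕ} (φ : ℕ → R) (σ : Equiv.Perm (Fin d)) :
    PP φ σ = ∏ q : Quotient (Equiv.Perm.SameCycle.setoid σ),
      φ (Finset.univ.filter fun m => (Quotient.mk (Equiv.Perm.SameCycle.setoid σ) m) = q).card := by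
  set s := Equiv.Perm.SameCycle.setoid σ with hs
  have hq : ∀ x y : Fin d, (Quotient.mk s x = Quotient.mk s y) ↔ σ.SameCycle x y :=
    fun x y => Quotient.eq
  let F : Quotient s → Equiv.Perm (Fin d) :=
    Quotient.lift (fun x => σ.cycleOf x) (fun x y h => Equiv.Perm.SameCycle.cycleOf_eq h)
  have hF : ∀ x, F (Quotient.mk s x) = σ.cycleOf x := fun x => rfl
  rw [← Finset.prod_filter_mul_prod_filter_not Finset.univ (fun q => F q ≠ 1)]
  unfold PP
  congr 1
  · rw [Equiv.Perm.cycleType_def, Multiset.map_map]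
    symm
    change _ = ∏ c ∈ σ.cycleFactorsFinset, φ c.support.card
    apply Finset.prod_bij (fun q _ => F q)
    · intro q hq
      induction q using Quotient.inductionOn with | _ x
      rw [Finset.mem_filter, hF, Ne, Equiv.Perm.cycleOf_eq_one_iff] at hq
      rw [hF, Equiv.Perm.cycleOf_mem_cycleFactorsFinset_iff, Equiv.Perm.mem_support]
      exact hq.2
    · intro q h q' h' he
      induction q using Quotient.inductionOn with | _ x
      induction q' using Quotient.inductionOn with | _ y
      rw [Finset.mem_filter, hF, Ne, Equiv.Perm.cycleOf_eq_one_iff] at h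
      rw [hF, hF] at he
      have : x ∈ (σ.cycleOf x).support := by
        rw [Equiv.Perm.mem_support_cycleOf_iff, Equiv.Perm.mem_support]
        exact ⟨Equiv.Perm.SameCycle.refl _ _, h.2⟩
      rw [he, Equiv.Perm.mem_support_cycleOf_iff] at this
      rw [hq]
      exact this.1.symm
    · intro c hc
      have hcyc := (Equiv.Perm.mem_cycleFactorsFinset_iff.1 hc).1
      obtain ⟨x, hx⟩ := hcyc.nonempty_support
      have e := Equiv.Perm.cycle_is_cycleOf hx hc
      refine ⟨Quotient.mk s x, ?_, ?_⟩
      · rw [Finset.mem_filter, hF, ← e]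
        exact ⟨Finset.mem_univ _, hcyc.ne_one⟩
      · rw [hF, ← e]
    · intro q h
      induction q using Quotient.inductionOn with | _ x
      rw [Finset.mem_filter, hF, Ne, Equiv.Perm.cycleOf_eq_one_iff] at h
      congr 2
      ext m
      rw [hF, Equiv.Perm.mem_support_cycleOf_iff, Equiv.Perm.mem_support, Finset.mem_filter, hq]
      constructor
      · rintro ⟨_, h'⟩; exact ⟨h'.symm, h.2⟩
      · rintro ⟨h', _⟩; exact ⟨Finset.mem_univ _, h'.symm⟩
  · have : d - σ.cycleType.sum = (σ.supportᶜ).card := by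
      rw [Equiv.Perm.sum_cycleType, Finset.card_compl, Fintype.card_fin]
    rw [this, ← Finset.prod_const]
    apply Finset.prod_bij (fun m _ => Quotient.mk s m)
    · intro m hm
      rw [Finset.mem_compl, Equiv.Perm.mem_support, not_not] at hm
      simp only [Finset.mem_filter, Finset.mem_univ, true_and, not_not]
      rw [hF, Equiv.Perm.cycleOf_eq_one_iff]
      exact hm
    · intro m hm m' hm' he
      rw [Finset.mem_compl, Equiv.Perm.mem_support, not_not] at hm
      rw [hq] at he
      exact (Equiv.Perm.SameCycle.eq_of_left he hm)
    · intro q h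
      induction q using Quotient.inductionOn with | _ x
      simp only [Finset.mem_filter, Finset.mem_univ, true_and, not_not] at h
      rw [hF, Equiv.Perm.cycleOf_eq_one_iff] at h
      exact ⟨x, by rw [Finset.mem_compl, Equiv.Perm.mem_support, not_not]; exact h, rfl⟩
    · intro m hm
      rw [Finset.mem_compl, Equiv.Perm.mem_support, not_not] at hm
      congr 1
      symm
      rw [Finset.card_eq_one]
      refine ⟨m, ?_⟩
      ext k
      rw [Finset.mem_filter, hq, Finset.mem_singleton]
      constructor
      · rintro ⟨_, h⟩; exact (Equiv.Perm.SameCycle.eq_of_left h.symm hm).symm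
      · rintro rfl; exact ⟨Finset.mem_univ _, Equiv.Perm.SameCycle.refl _ _⟩

theorem PP_fix {d : ℕ} {α : Type*} [Fintype α] [DecidableEq α] (Y : α → R)
    (σ : Equiv.Perm (Fin d)) :
    PP (fun r => ∑ j, Y j ^ r) σ =
      ∑ f : Fin d → α with f ∘ σ = f, ∏ m, Y (f m) := by
  classical
  rw [PP_quot, Finset.prod_univ_sum, Fintype.piFinset_univ]
  set s := Equiv.Perm.SameCycle.setoid σ with hs
  apply Finset.sum_bij (fun (g : Quotient s → α) _ => fun m => g (Quotient.mk s m))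
  · intro g _
    rw [Finset.mem_filter]
    refine ⟨Finset.mem_univ _, ?_⟩
    funext m
    simp only [Function.comp]
    congr 1
    apply Quotient.sound
    exact Equiv.Perm.sameCycle_apply_left.2 (Equiv.Perm.SameCycle.refl _ _)
  · intro g _ g' _ h
    funext q
    induction q using Quotient.inductionOn with | _ x
    exact congrFun h x
  · intro f hf
    rw [Finset.mem_filter] at hf
    have h1 : ∀ m, f (σ m) = f m := fun m => congrFun hf.2 m
    refine ⟨Quotient.lift f ?_, Finset.mem_univ _, rfl⟩
    intro a b hab
    obtain ⟨k, hk⟩ := (show σ.SameCycle a b from hab).exists_nat_pow_eq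
    rw [← hk]
    clear hk
    induction k with
    | zero => simp
    | succ k ih => rw [pow_succ', Equiv.Perm.mul_apply, h1]; exact ih
  · intro g _
    rw [← Finset.prod_fiberwise' Finset.univ (fun m => Quotient.mk s m) (fun q => Y (g q))]
    simp only [Finset.prod_const]

/-- content of a function -/
def cnt {d : ℕ} {α : Type*} [DecidableEq α] (f : Fin d → α) (a : α) : ℕ :=
  (Finset.univ.filter fun m => f m = a).card

theorem prod_cnt {d : ℕ} {α : Type*} [Fintype α] [DecidableEq α] {M : Type*} [CommMonoid M]
    (Y : α → M) (f : Fin d → α) : ∏ m, Y (f m) = ∏ a, Y a ^ cnt f a := by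
  rw [← Finset.prod_fiberwise' Finset.univ f Y]
  simp [cnt]

theorem sum_cnt {d : ℕ} {α : Type*} [Fintype α] [DecidableEq α] (f : Fin d → α) :
    ∑ a, cnt f a = d := by
  unfold cnt
  rw [Finset.sum_card_fiberwise_eq_card_filter]; simp

theorem coeff_prod_X {d : ℕ} {α : Type*} [Fintype α] [DecidableEq α] (f : Fin d → α) (e : α →₀ ℕ) :
    coeff e (∏ m, (X (f m) : MvPolynomial α ℤ)) = if cnt f = e then 1 else 0 := by
  rw [prod_cnt]
  have : (∏ a, (X a : MvPolynomial α ℤ) ^ cnt f a) =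
      monomial (Finsupp.equivFunOnFinite.symm (cnt f)) 1 := by
    rw [monomial_eq, Finsupp.prod_fintype _ _ (by simp)]
    simp
  rw [this, coeff_monomial]
  congr 1
  apply propext
  constructor
  · intro h; rw [← h]; rfl
  · intro h; ext a; rw [← h]; rfl

theorem card_cnt {d : ℕ} {α : Type*} [Fintype α] [DecidableEq α] (a : α → ℕ)
    (ha : ∑ i, a i = d) :
    (Finset.univ.filter fun F : Fin d → α => cnt F = a).card = Nat.multinomial Finset.univ a := by
  have h1 := Fintype.sum_pow (fun i : α => (X i : MvPolynomial α ℤ)) d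
  have h2 := Finset.sum_pow_eq_sum_piAntidiag Finset.univ (fun i : α => (X i : MvPolynomial α ℤ)) d
  rw [h1] at h2
  have h3 := congrArg (coeff (Finsupp.equivFunOnFinite.symm a)) h2
  rw [coeff_sum, coeff_sum] at h3
  simp only [coeff_prod_X] at h3
  have : ∀ k : α → ℕ, coeff (Finsupp.equivFunOnFinite.symm a)
      ((Nat.multinomial Finset.univ k : MvPolynomial α ℤ) * ∏ i, X i ^ k i) =
      if k = a then (Nat.multinomial Finset.univ k : ℤ) else 0 := by
    intro k
    have : ((Nat.multinomial Finset.univ k : MvPolynomial α ℤ) * ∏ i, X i ^ k i) =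
      monomial (Finsupp.equivFunOnFinite.symm k) (Nat.multinomial Finset.univ k : ℤ) := by
      rw [monomial_eq, Finsupp.prod_fintype _ _ (by simp)]
      simp
    rw [this, coeff_monomial]
    congr 1
    simp
  simp only [this] at h3
  rw [Finset.sum_ite_eq' , if_pos (by simp [ha])] at h3
  rw [Finset.sum_boole] at h3
  exact_mod_cast h3

theorem burnside {d : ℕ} {α : Type*} [Fintype α] [DecidableEq α] (w : (α → ℕ) → R) :
    ∑ F : Fin d → α, ∑ σ : Equiv.Perm (Fin d), (if F ∘ σ = F then w (cnt F) else 0) =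
      (d.factorial : R) * ∑ a ∈ Finset.piAntidiag Finset.univ d, w a := by
  have h1 : ∀ F : Fin d → α, ∑ σ : Equiv.Perm (Fin d), (if F ∘ σ = F then w (cnt F) else 0) =
      ((∏ i, (cnt F i).factorial : ℕ) : R) * w (cnt F) := by
    intro F
    have := DomMulAct.stabilizer_card F
    rw [← Finset.sum_filter, Finset.sum_const, nsmul_eq_mul]
    congr 2
    rw [Fintype.card_subtype] at this
    rw [this]
    simp only [Fintype.card_subtype]
    rfl
  simp only [h1]
  rw [Finset.mul_sum, ← Finset.sum_fiberwise_of_maps_to (g := fun F : Fin d → α => cnt F)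
    (t := Finset.piAntidiag Finset.univ d)]
  · apply Finset.sum_congr rfl
    intro a ha
    have ha' : ∑ i, a i = d := by simpa using ha
    rw [Finset.sum_congr rfl (g := fun _ => ((∏ i, (a i).factorial : ℕ) : R) * w a)]
    · rw [Finset.sum_const, card_cnt a ha', nsmul_eq_mul, ← mul_assoc]
      congr 1
      have := Nat.multinomial_spec Finset.univ a
      rw [ha'] at this
      rw [← this]
      push_cast; ring
    · intro F hF
      rw [(Finset.mem_filter.1 hF).2]
  · intro F _
    simp [sum_cnt]

end cyc

section cauchy
variable {R : Type*} [CommRing R]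

/-- complete homogeneous polynomial -/
def hh {α : Type*} [Fintype α] [DecidableEq α] (Y : α → R) (n : ℕ) : R :=
  ∑ a ∈ Finset.piAntidiag Finset.univ n, ∏ j, Y j ^ a j

theorem hh_eq_hz (k : ℕ) (Y : Fin k → R) (n : ℕ) : hh Y n = hz (List.ofFn Y) n := by
  induction k generalizing n with
  | zero =>
    simp only [hh, List.ofFn_zero, hz]
    rw [Finset.univ_eq_empty, Finset.piAntidiag_empty]
    by_cases hn : n = 0
    · simp [hn]
    · simp [hn]
  | succ k ih =>
    rw [List.ofFn_succ, hz, if_neg (by omega)]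
    simp only [Int.toNat_natCast, ← ih (fun i => Y i.succ)]
    simp only [hh, Finset.mul_sum]
    rw [Finset.sum_sigma']
    symm
    apply Finset.sum_bij (fun (p : (_ : ℕ) × (Fin k → ℕ)) _ =>
      (Fin.cons (n - p.1) p.2 : Fin (k + 1) → ℕ))
    · rintro ⟨j, b⟩ h
      simp only [Finset.mem_sigma, Finset.mem_range, Finset.mem_piAntidiag, Finset.mem_univ,
        implies_true, and_true] at h ⊢
      rw [Fin.sum_univ_succ]
      simp only [Fin.cons_zero, Fin.cons_succ]
      rw [h.2]; omega
    · rintro ⟨j, b⟩ h ⟨j', b'⟩ h' e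
      simp only [Finset.mem_sigma, Finset.mem_range, Finset.mem_piAntidiag, Finset.mem_univ,
        implies_true, and_true] at h h'
      have := Fin.cons_injective2 e
      have e1 := this.1
      have e2 := this.2
      simp only at e1 e2
      obtain rfl : j = j' := by omega
      rw [e2]
    · intro a ha
      simp only [Finset.mem_piAntidiag, Finset.mem_univ, implies_true, and_true] at ha
      rw [Fin.sum_univ_succ] at ha
      refine ⟨⟨∑ i : Fin k, a i.succ, fun i => a i.succ⟩, ?_, ?_⟩
      · simp only [Finset.mem_sigma, Finset.mem_range, Finset.mem_piAntidiag, Finset.mem_univ,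
          implies_true, and_true]
        omega
      · funext i
        refine Fin.cases ?_ (fun i => ?_) i
        · simp only [Fin.cons_zero]; omega
        · simp
    · rintro ⟨j, b⟩ h
      rw [Fin.prod_univ_succ]
      simp

theorem coeff_perm {d : ℕ} (σ : Equiv.Perm (Fin d)) (e : Fin d →₀ ℕ) :
    coeff e (permPowSum d σ) =
      ∑ f : Fin d → Fin d with f ∘ σ = f, if cnt f = e then 1 else 0 := by
  have : permPowSum d σ = PP (fun r => ∑ j, (X j : MvPolynomial (Fin d) ℤ) ^ r) σ := rfl
  rw [this, PP_fix, coeff_sum]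
  simp only [coeff_prod_X]

theorem cauchy {d : ℕ} {α : Type*} [Fintype α] [DecidableEq α] (Y : α → R) (e : Fin d →₀ ℕ)
    (he : ∑ i, e i = d) :
    ∑ σ : Equiv.Perm (Fin d), ((coeff e (permPowSum d σ) : ℤ) : R) * PP (fun r => ∑ j, Y j ^ r) σ =
      (d.factorial : R) * ∏ m, hh Y (e m) := by
  let w : (Fin d × α → ℕ) → R := fun a => if (fun m => ∑ j, a (m, j)) = e then
    ∏ m, ∏ j, Y j ^ a (m, j) else 0
  have hb := burnside (d := d) w
  have h1 : ∑ a ∈ Finset.piAntidiag Finset.univ d, w a = ∏ m, hh Y (e m) := by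
    simp only [hh]
    rw [Finset.prod_univ_sum]
    simp only [w]
    rw [← Finset.sum_filter]
    apply Finset.sum_bij (fun (a : Fin d × α → ℕ) _ => fun m j => a (m, j))
    · intro a ha
      rw [Finset.mem_filter] at ha
      rw [Fintype.mem_piFinset]
      intro m
      simp only [Finset.mem_piAntidiag, Finset.mem_univ, implies_true, and_true]
      exact congrFun ha.2 m
    · intro a _ b _ h
      funext p
      exact congrFun (congrFun h p.1) p.2
    · intro b hb
      rw [Fintype.mem_piFinset] at hb
      have hb' : ∀ m, ∑ j, b m j = e m := fun m => by simpa using hb m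
      refine ⟨fun p => b p.1 p.2, ?_, rfl⟩
      rw [Finset.mem_filter]
      constructor
      · simp only [Finset.mem_piAntidiag, Finset.mem_univ, implies_true, and_true]
        rw [Fintype.sum_prod_type]
        simp only [hb', he]
      · funext m; exact hb' m
    · intro a _; rfl
  rw [h1] at hb
  rw [← hb, Finset.sum_comm]
  apply Finset.sum_congr rfl
  intro σ _
  rw [coeff_perm, PP_fix]
  push_cast
  rw [Finset.sum_filter, Finset.sum_filter, Finset.sum_mul_sum, ← Fintype.sum_prod_type',
    ← (Equiv.arrowProdEquivProdArrow (Fin d) (fun _ => Fin d) (fun _ => α)).sum_comp]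
  apply Finset.sum_congr rfl
  intro F _
  have c1 : (fun m => ∑ j, cnt F (m, j)) = cnt (fun i => (F i).1) := by
    funext m
    simp only [cnt, Finset.card_filter]
    rw [Finset.sum_comm]
    apply Finset.sum_congr rfl
    intro i _
    by_cases h : (F i).1 = m
    · simp [Prod.ext_iff, h]
    · simp [Prod.ext_iff, h]
  have c2 : ∏ m, ∏ j, Y j ^ cnt F (m, j) = ∏ i, Y (F i).2 := by
    rw [prod_cnt (fun p : Fin d × α => Y p.2) F, Fintype.prod_prod_type]
  have c3 : F ∘ σ = F ↔ ((fun i => (F i).1) ∘ σ = (fun i => (F i).1)) ∧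
      ((fun i => (F i).2) ∘ σ = (fun i => (F i).2)) := by
    simp only [funext_iff, Function.comp, Prod.ext_iff, forall_and]
  simp only [w, c1, c2, c3, Equiv.arrowProdEquivProdArrow, Equiv.coe_fn_mk]
  by_cases h1 : (fun i => (F i).1) ∘ σ = (fun i => (F i).1) <;>
  by_cases h2 : (fun i => (F i).2) ∘ σ = (fun i => (F i).2) <;> simp [h1, h2]
  by_cases h3 : (cnt fun i => (F i).1) = ⇑e
  · rw [if_pos h3]
    exact (congrArg (· * _) (if_pos h3)).trans (one_mul _)
  · rw [if_neg h3]
    exact (congrArg (· * _) (if_neg h3)).trans (zero_mul _)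
end cauchy

section frob

theorem vandermonde_det (d : ℕ) : vandermonde d =
    (Matrix.of fun i j : Fin d => (X i : MvPolynomial (Fin d) ℤ) ^ (d - 1 - (j : ℕ))).det := by
  have h := Matrix.det_vandermonde (fun i : Fin d => (X (Fin.rev i) : MvPolynomial (Fin d) ℤ))
  rw [← Matrix.det_submatrix_equiv_self Fin.revPerm] at h
  have e : (Matrix.vandermonde fun i : Fin d => (X (Fin.rev i) : MvPolynomial (Fin d) ℤ)).submatrix
      Fin.revPerm Fin.revPerm =
      Matrix.of fun i j : Fin d => (X i : MvPolynomial (Fin d) ℤ) ^ (d - 1 - (j : ℕ)) := by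
    ext1 i j
    simp only [Matrix.submatrix_apply, Matrix.vandermonde_apply, Fin.revPerm_apply, Fin.rev_rev,
      Matrix.of_apply, Fin.val_rev]
    congr 1
    omega
  rw [e] at h
  rw [h, vandermonde, Finset.prod_sigma']
  symm
  apply Finset.prod_bij (fun (p : (_ : Fin d) × Fin d) _ => (Fin.rev p.2, Fin.rev p.1))
  · rintro ⟨i, j⟩ h
    simpa using h
  · rintro ⟨i, j⟩ _ ⟨i', j'⟩ _ h
    simp at h
    simp [h]
  · rintro ⟨i, j⟩ h
    refine ⟨⟨Fin.rev j, Fin.rev i⟩, ?_, ?_⟩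
    · simpa using h
    · simp
  · rintro ⟨i, j⟩ _
    rfl

/-- exponent difference -/
noncomputable def ediff (d : ℕ) (lam : ℕ → ℕ) (w : Equiv.Perm (Fin d)) : Fin d →₀ ℕ :=
  Finsupp.equivFunOnFinite.symm (fun i => lam i.val + (d - 1 - i.val) - (d - 1 - (w i).val))

theorem chi_eq (d : ℕ) (lam : ℕ → ℕ) (σ : Equiv.Perm (Fin d)) :
    chi d lam σ = ∑ w : Equiv.Perm (Fin d), ((Equiv.Perm.sign w : ℤ) *
      if ∀ i : Fin d, d - 1 - (w i).val ≤ lam i.val + (d - 1 - i.val) then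
        coeff (ediff d lam w) (permPowSum d σ) else 0) := by
  rw [chi, vandermonde_det, ← Matrix.det_transpose, Matrix.det_apply', Finset.sum_mul, coeff_sum]
  apply Finset.sum_congr rfl
  intro w _
  have : (((Equiv.Perm.sign w : ℤ) : MvPolynomial (Fin d) ℤ) * ∏ i, (Matrix.of fun i j : Fin d =>
      (X i : MvPolynomial (Fin d) ℤ) ^ (d - 1 - (j : ℕ))).transpose (w i) i) =
      monomial (Finsupp.equivFunOnFinite.symm (fun i : Fin d => d - 1 - (w i).val))
        (Equiv.Perm.sign w : ℤ) := by
    rw [monomial_eq, Finsupp.prod_fintype _ _ (by simp)]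
    simp
  rw [this, coeff_monomial_mul']
  have hle : (Finsupp.equivFunOnFinite.symm (fun i : Fin d => d - 1 - (w i).val) ≤ staircase d lam)
      ↔ ∀ i : Fin d, d - 1 - (w i).val ≤ lam i.val + (d - 1 - i.val) := Iff.rfl
  have he : staircase d lam - Finsupp.equivFunOnFinite.symm (fun i : Fin d => d - 1 - (w i).val)
      = ediff d lam w := by
    ext i; rfl
  rw [he]
  simp only [hle]
  split_ifs <;> simp

theorem frob {R : Type*} [CommRing R] (d k : ℕ) (Y : Fin k → R) (lam : ℕ → ℕ)
    (hl : ∑ i : Fin d, lam i = d) :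
    ∑ σ : Equiv.Perm (Fin d), (chi d lam σ : R) * PP (fun r => ∑ j, Y j ^ r) σ =
      (d.factorial : R) * (JT (List.ofFn Y) d lam).det := by
  simp only [chi_eq]
  push_cast
  simp only [Finset.sum_mul]
  rw [Finset.sum_comm, ← Matrix.det_transpose, Matrix.det_apply', Finset.mul_sum]
  apply Finset.sum_congr rfl
  intro w _
  by_cases hw : ∀ i : Fin d, d - 1 - (w i).val ≤ lam i.val + (d - 1 - i.val)
  · simp only [if_pos hw, mul_assoc]
    rw [← Finset.mul_sum, cauchy]
    · rw [mul_left_comm]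
      congr 2
      apply Finset.prod_congr rfl
      intro m _
      rw [hh_eq_hz]
      simp only [JT, Matrix.transpose_apply, Matrix.of_apply]
      congr 1
      have := hw m
      simp only [ediff, Finsupp.equivFunOnFinite_symm_apply_apply]
      omega
    · have h1 : ∑ i, (ediff d lam w i + (d - 1 - (w i).val)) =
          ∑ i : Fin d, (lam i + (d - 1 - i.val)) := by
        apply Finset.sum_congr rfl
        intro i _
        have := hw i
        simp only [ediff, Finsupp.equivFunOnFinite_symm_apply_apply]
        omega
      rw [Finset.sum_add_distrib, Finset.sum_add_distrib,
        Equiv.sum_comp w (fun i : Fin d => d - 1 - i.val), hl] at h1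
      omega
  · simp only [if_neg hw]
    push Not at hw
    obtain ⟨i, hi⟩ := hw
    rw [Finset.prod_eq_zero (Finset.mem_univ i)]
    · simp
    · simp only [JT, Matrix.transpose_apply, Matrix.of_apply]
      apply hz_neg
      omega

theorem perm_cases (d : ℕ) (w : Equiv.Perm (Fin (d + 2)))
    (h : ∀ i : Fin (d + 2), 2 ≤ i.val → i.val ≤ (w i).val) :
    w = 1 ∨ w = Equiv.swap 0 1 := by
  have h1 : ∀ k : ℕ, ∀ i : Fin (d + 2), 2 ≤ i.val → d + 1 - i.val ≤ k → w i = i := by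
    intro k
    induction k with
    | zero =>
      intro i hi hk
      have := h i hi
      ext; omega
    | succ k ih =>
      intro i hi hk
      by_contra hne
      have h2 := h i hi
      have h3 : i.val < (w i).val := lt_of_le_of_ne h2 (fun e => hne (Fin.ext e.symm))
      have := ih (w i) (by omega) (by omega)
      exact hne (w.injective this)
  have h2 : ∀ i : Fin (d + 2), 2 ≤ i.val → w i = i := fun i hi => h1 _ i hi le_rfl
  have h3 : ∀ i : Fin (d + 2), i.val < 2 → (w i).val < 2 := by
    intro i hi
    by_contra hc
    have := h2 (w i) (by omega)
    have := w.injective this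
    rw [this] at hc
    omega
  have v1 : (1 : Fin (d + 2)).val = 1 := rfl
  have h4 : w 0 ≠ w 1 := fun e => by
    have := w.injective e
    exact absurd (congrArg Fin.val this) (by simp)
  have a0 := h3 0 (by simp)
  have a1 := h3 1 (by simp)
  have h4' : (w 0).val ≠ (w 1).val := fun e => h4 (Fin.ext e)
  rcases (by omega : (w 0).val = 0 ∨ (w 0).val = 1) with e | e
  · left
    have e1 : (w 1).val = 1 := by omega
    ext i
    rcases (by omega : i.val = 0 ∨ i.val = 1 ∨ 2 ≤ i.val) with hi | hi | hi
    · obtain rfl : i = 0 := Fin.ext hi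
      simpa using e
    · obtain rfl : i = 1 := Fin.ext hi
      simpa using e1
    · rw [h2 i hi]; rfl
  · right
    have e1 : (w 1).val = 0 := by omega
    ext i
    rcases (by omega : i.val = 0 ∨ i.val = 1 ∨ 2 ≤ i.val) with hi | hi | hi
    · obtain rfl : i = 0 := Fin.ext hi
      simpa using e
    · obtain rfl : i = 1 := Fin.ext hi
      simpa using e1
    · rw [h2 i hi, Equiv.swap_apply_of_ne_of_ne]
      · intro h; rw [h] at hi; simp at hi
      · intro h; rw [h] at hi; simp at hi

/-- two-row exponent -/
noncomputable def e2 (d i : ℕ) : Fin (d + 2) →₀ ℕ :=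
  Finsupp.equivFunOnFinite.symm (fun k => if k.val = 0 then d + 2 - i else
    if k.val = 1 then i else 0)

theorem coeff_two (d i : ℕ) (hi : i ≤ d + 2) (σ : Equiv.Perm (Fin (d + 2))) :
    coeff (e2 d i) (permPowSum (d + 2) σ) =
      (PP (fun r => 1 + (Polynomial.X : Polynomial ℤ) ^ r) σ).coeff i := by
  let θ : Fin (d + 2) → Polynomial ℤ := fun k => if k.val = 0 then 1 else
    if k.val = 1 then Polynomial.X else 0
  have h1 : PP (fun r => 1 + (Polynomial.X : Polynomial ℤ) ^ r) σ =
      PP (fun r => ∑ k, θ k ^ r) σ := by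
    apply PP_congr
    intro r hr
    rw [Fin.sum_univ_succ, Fin.sum_univ_succ, Finset.sum_eq_zero]
    · simp [θ]
    · intro k _
      simp [θ, hr]
  rw [h1, PP_fix, coeff_perm, Polynomial.finsetSum_coeff]
  apply Finset.sum_congr rfl
  intro f _
  have hs := sum_cnt f
  rw [prod_cnt, Fin.prod_univ_succ, Fin.prod_univ_succ]
  rw [Fin.sum_univ_succ, Fin.sum_univ_succ] at hs
  by_cases hz : ∀ k : Fin d, cnt f k.succ.succ = 0
  · rw [Finset.prod_eq_one (fun k _ => by rw [hz k, pow_zero])]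
    rw [Finset.sum_eq_zero (fun k _ => hz k)] at hs
    simp only [θ, Fin.val_zero, if_true, one_pow, one_mul, mul_one, Fin.val_succ, zero_add,
      one_ne_zero, if_false, Polynomial.coeff_X_pow]
    congr 1
    apply propext
    constructor
    · intro h
      have := congrFun h (Fin.succ 0)
      simp only [e2, Finsupp.equivFunOnFinite_symm_apply_apply] at this
      simp at this
      rw [← this]; rfl
    · intro h
      funext k
      simp only [e2, Finsupp.equivFunOnFinite_symm_apply_apply]
      refine Fin.cases ?_ (fun k => Fin.cases ?_ (fun k => ?_) k) k
      · simp; omega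
      · simp only [Fin.val_succ, Fin.val_zero]; simp; rw [h]; rfl
      · simp [hz k]
  · push Not at hz
    obtain ⟨k, hk⟩ := hz
    rw [if_neg, Finset.prod_eq_zero (Finset.mem_univ k)]
    · simp
    · simp [θ, hk]
    · intro h
      apply hk
      rw [h]
      simp [e2]

theorem chi_two (d i : ℕ) (hi : i ≤ d + 2) (σ : Equiv.Perm (Fin (d + 2))) :
    chi (d + 2) (pad (row i) (d + 2)) σ =
      ((1 - Polynomial.X) * PP (fun r => 1 + (Polynomial.X : Polynomial ℤ) ^ r) σ).coeff i := by
  have hp : psize (row i) = i := by simp [psize, row]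
  have p0 : pad (row i) (d + 2) 0 = d + 2 - i := by simp [pad, hp]
  have p1 : pad (row i) (d + 2) 1 = i := by simp [pad, row]
  have p2 : ∀ k, 2 ≤ k → pad (row i) (d + 2) k = 0 := by
    intro k hk
    rw [pad, if_neg (by omega), row, Finsupp.single_eq_of_ne (by omega)]
  have v1 : (1 : Fin (d + 2)).val = 1 := rfl
  have v0 : (0 : Fin (d + 2)).val = 0 := rfl
  have hne : (1 : Equiv.Perm (Fin (d + 2))) ≠ Equiv.swap 0 1 := by
    intro h
    have := congrArg (fun w : Equiv.Perm (Fin (d + 2)) => w 0) h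
    simp at this
  rw [chi_eq, ← Finset.sum_subset (Finset.subset_univ {1, Equiv.swap 0 1})]
  · rw [Finset.sum_pair hne, if_pos (by intro k; simp)]
    have e1 : ediff (d + 2) (pad (row i) (d + 2)) 1 = e2 d i := by
      ext k
      simp only [ediff, e2, Finsupp.equivFunOnFinite_symm_apply_apply, Equiv.Perm.one_apply,
        Nat.add_sub_cancel]
      split_ifs with h h'
      · rw [h, p0]
      · rw [h', p1]
      · exact p2 _ (by omega)
    rw [e1, coeff_two d i hi, sub_mul, Polynomial.coeff_sub, one_mul]
    simp only [Equiv.Perm.sign_one, Units.val_one, Int.cast_one, one_mul]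
    rw [Equiv.Perm.sign_swap (by simp), sub_eq_add_neg]
    congr 1
    cases i with
    | zero =>
      rw [if_neg]
      · simp
      · intro h
        have := h 1
        simp [p1] at this
    | succ i =>
      rw [if_pos, Polynomial.coeff_X_mul]
      · have e3 : ediff (d + 2) (pad (row (i + 1)) (d + 2)) (Equiv.swap 0 1) = e2 d i := by
          ext k
          simp only [ediff, e2, Finsupp.equivFunOnFinite_symm_apply_apply]
          split_ifs with h h'
          · obtain rfl : k = 0 := Fin.ext h
            rw [Equiv.swap_apply_left, v0, v1, p0]; omega
          · obtain rfl : k = 1 := Fin.ext h'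
            rw [Equiv.swap_apply_right, v0, v1, p1]; omega
          · rw [Equiv.swap_apply_of_ne_of_ne, p2 _ (by omega)]
            · omega
            · intro hk; rw [hk] at h; simp at h
            · intro hk; rw [hk] at h'; simp at h'
        rw [e3, coeff_two d i (by omega)]
        simp
      · intro k
        rcases (by omega : k.val = 0 ∨ k.val = 1 ∨ 2 ≤ k.val) with h | h | h
        · obtain rfl : k = 0 := Fin.ext h
          rw [Equiv.swap_apply_left, v0, v1]; omega
        · obtain rfl : k = 1 := Fin.ext h
          rw [Equiv.swap_apply_right, v0, v1, p1]; omega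
        · rw [Equiv.swap_apply_of_ne_of_ne]
          · omega
          · intro hk; rw [hk] at h; simp at h
          · intro hk; rw [hk] at h; simp at h
  · intro w _ hw
    rw [if_neg, mul_zero]
    intro h
    apply hw
    have := perm_cases d w (by
      intro k hk
      have := h k
      rw [p2 _ hk] at this
      have := (w k).2
      omega)
    simpa using this
end frob

section final

theorem coeff_xy (A B : Polynomial ℤ) (i l : ℕ) :
    ((Polynomial.aeval xq A * Polynomial.aeval yq B).coeff (i + l)).coeff l =
      A.coeff i * B.coeff l := by
  induction A using Polynomial.induction_on' with
  | add p q hp hq => simp only [map_add, add_mul, Polynomial.coeff_add, hp, hq]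
  | monomial n a =>
    induction B using Polynomial.induction_on' with
    | add p q hp hq => simp only [map_add, mul_add, Polynomial.coeff_add, hp, hq]
    | monomial m b =>
      have : (Polynomial.aeval xq (Polynomial.monomial n a) *
          Polynomial.aeval yq (Polynomial.monomial m b) : Polynomial (Polynomial ℤ)) =
          Polynomial.monomial (n + m) (Polynomial.monomial m (a * b)) := by
        simp only [Polynomial.aeval_X, xq, yq, ← Polynomial.C_mul_X_pow_eq_monomial,
          map_mul, map_pow, mul_pow, pow_add, eq_intCast, algebraMap_int_eq, map_intCast]
        ring
      rw [this, Polynomial.coeff_monomial, Polynomial.coeff_monomial, Polynomial.coeff_monomial]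
      by_cases h1 : m = l
      · subst h1
        by_cases h2 : n = i
        · subst h2
          simp
        · have : n + m ≠ i + m := by omega
          simp [h2]
      · rw [if_neg h1, mul_zero]
        split_ifs <;> simp [Polynomial.coeff_monomial, h1]

/-- generating function -/
noncomputable def GG (d : ℕ) (μ : ℕ → ℕ) : Polynomial (Polynomial ℤ) :=
  (1 - xq) * (1 - yq) * (JT [1, xq * yq, xq, yq] d μ).det

theorem main_formula (d i l : ℕ) (hi : i ≤ d + 2) (hl : l ≤ d + 2) (μ : ℕ → ℕ)
    (hμ : ∑ k : Fin (d + 2), μ k = d + 2) :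
    gKron (d + 2) (pad (row i) (d + 2)) (pad (row l) (d + 2)) μ =
      ((GG (d + 2) μ).coeff (i + l)).coeff l := by
  have hs : ∀ σ : Equiv.Perm (Fin (d + 2)),
      chi (d + 2) (pad (row i) (d + 2)) σ * chi (d + 2) (pad (row l) (d + 2)) σ *
        chi (d + 2) μ σ =
      (((1 - xq) * (1 - yq) * ((chi (d + 2) μ σ : Polynomial (Polynomial ℤ)) *
        PP (fun r => ∑ j, (![1, xq * yq, xq, yq] : Fin 4 → _) j ^ r) σ)).coeff (i + l)).coeff l := by
    intro σ
    rw [chi_two d i hi, chi_two d l hl, ← coeff_xy]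
    have e : ∀ z : Polynomial (Polynomial ℤ), Polynomial.aeval z
        ((1 - Polynomial.X) * PP (fun r => 1 + (Polynomial.X : Polynomial ℤ) ^ r) σ) =
        (1 - z) * PP (fun r => 1 + z ^ r) σ := by
      intro z
      have := PP_map (Polynomial.aeval z : Polynomial ℤ →ₐ[ℤ] Polynomial (Polynomial ℤ)).toRingHom
        (fun r => 1 + (Polynomial.X : Polynomial ℤ) ^ r) σ
      simp at this
      rw [map_mul, this]
      simp
    rw [e, e]
    have e2 : PP (fun r => 1 + xq ^ r) σ * PP (fun r => 1 + yq ^ r) σ =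
        PP (fun r => ∑ j, (![1, xq * yq, xq, yq] : Fin 4 → _) j ^ r) σ := by
      rw [PP_mul]
      apply PP_congr
      intro r _
      simp [Fin.sum_univ_four]
      ring
    rw [← e2]
    generalize PP (fun r => 1 + xq ^ r) σ = P
    generalize PP (fun r => 1 + yq ^ r) σ = Q
    generalize chi (d + 2) μ σ = c
    have : (1 - xq) * (1 - yq) * ((c : Polynomial (Polynomial ℤ)) * (P * Q)) =
      ((1 - xq) * P * ((1 - yq) * Q)) * Polynomial.C (Polynomial.C c) := by
      simp
      ring
    rw [this, Polynomial.coeff_mul_C, Polynomial.coeff_mul_C]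
  rw [gKron, Finset.sum_congr rfl (fun σ _ => hs σ), ← Polynomial.finsetSum_coeff,
    ← Polynomial.finsetSum_coeff, ← Finset.mul_sum, frob (d + 2) 4 _ μ hμ]
  have : (1 - xq) * (1 - yq) * (((d + 2).factorial : Polynomial (Polynomial ℤ)) *
      (JT (List.ofFn ![1, xq * yq, xq, yq]) (d + 2) μ).det) =
      Polynomial.C (Polynomial.C ((d + 2).factorial : ℤ)) * GG (d + 2) μ := by
    have : List.ofFn ![1, xq * yq, xq, yq] = [1, xq * yq, xq, yq] := by simp [List.ofFn_succ]
    rw [this, GG]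
    simp
    ring
  rw [this, Polynomial.coeff_C_mul, Polynomial.coeff_C_mul]
  exact Int.mul_ediv_cancel_left _ (by exact_mod_cast (Nat.factorial_pos _).ne')

theorem kron_ineq (n : ℕ →₀ ℕ) (hn : IsPtn n) (i l t : ℕ) (h : i + 2 * t ≤ l) :
    ∃ D : ℕ, ∀ d : ℕ, D ≤ d →
      gKron d (pad (row i) d) (pad (row l) d) (pad n d) ≤
        gKron d (pad (row (i + t)) d) (pad (row (l - t)) d) (pad n d) := by
  obtain ⟨s, hs⟩ := n.support.exists_nat_subset_range
  refine ⟨psize n + i + l + s + 3, fun d hd => ?_⟩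
  obtain ⟨d, rfl⟩ : ∃ e, d = e + 2 := ⟨d - 2, by omega⟩
  have hps : psize n = ∑ k ∈ Finset.range (d + 1), n k := by
    rw [psize, Finsupp.sum_of_support_subset _ _ _ (by simp)]
    exact hs.trans (Finset.range_subset_range.2 (by omega))
  have hμ : ∑ k : Fin (d + 2), pad n (d + 2) k = d + 2 := by
    rw [Fin.sum_univ_eq_sum_range (fun k => pad n (d + 2) k), Finset.sum_range_succ']
    simp only [pad, Nat.add_sub_cancel, Nat.succ_ne_zero, if_false, if_true]
    rw [← hps]
    omega
  rw [main_formula d i l (by omega) (by omega) _ hμ,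
    main_formula d (i + t) (l - t) (by omega) (by omega) _ hμ,
    show i + t + (l - t) = i + l by omega]
  refine ineq_step (d + 1) (pad n (d + 2)) ?_ i l t ?_ h _ rfl
  · intro a b hab
    simpa [pad] using hn a b hab
  · simp only [pad, if_true]
    omega

theorem gKron_comm (d : ℕ) (a b c : ℕ → ℕ) : gKron d a b c = gKron d b a c := by
  simp only [gKron]
  congr 1
  apply Finset.sum_congr rfl
  intro σ _
  ring
end final


/-- Theorem `thm!` of the paper: for `i < j ≤ k < l` with `j + k = i + l` and any
partition `ν`, the reduced Kronecker coefficients of one-row partitions satisfy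
`ḡ_{(j)(k)}^ν ≥ ḡ_{(i)(l)}^ν` (stated via the stabilized Kronecker coefficients);
in particular the log-concavity conjecture holds for one-row partitions. -/
theorem reduced_kron_one_row (n : ℕ →₀ ℕ) (hn : IsPtn n) :
    (∀ i j k l : ℕ, i < j → j ≤ k → k < l → j + k = i + l →
      ∃ D : ℕ, ∀ d : ℕ, D ≤ d →
        gKron d (pad (row i) d) (pad (row l) d) (pad n d) ≤
          gKron d (pad (row j) d) (pad (row k) d) (pad n d)) ∧
    (∀ a b : ℕ, Even (a + b) →
      ∃ D : ℕ, ∀ d : ℕ, D ≤ d →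
        gKron d (pad (row a) d) (pad (row b) d) (pad n d) ≤
          gKron d (pad (row ((a + b) / 2)) d) (pad (row ((a + b) / 2)) d) (pad n d)) := by
  refine ⟨?_, ?_⟩
  · intro i j k l h1 h2 h3 h4
    have := kron_ineq n hn i l (j - i) (by omega)
    rwa [show i + (j - i) = j by omega, show l - (j - i) = k by omega] at this
  · intro a b hab
    obtain ⟨c, hc⟩ := hab
    rw [show (a + b) / 2 = c by omega]
    rcases le_total a b with h | h
    · have := kron_ineq n hn a b (c - a) (by omega)
      rwa [show a + (c - a) = c by omega, show b - (c - a) = c by omega] at this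
    · have := kron_ineq n hn b a (c - b) (by omega)
      rw [show b + (c - b) = c by omega, show a - (c - b) = c by omega] at this
      obtain ⟨D, hD⟩ := this
      exact ⟨D, fun d hd => by rw [gKron_comm]; exact hD d hd⟩
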